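/- Let x* be an optimal solution of the KP-LP (x* ∈ P_KP and ∑_i p_i x*_i ≥ ∑_i p_i x_i for all x ∈ P_KP), and suppose the color constraint is violated for some color c̃, i.e. ∑_{i : κ_i = c̃} x*_i − ∑_{i : κ_i ≠ c̃} x*_i > 1. Then there exists an optimal solution x' of the CKP-LP (x' ∈ P_CKP and ∑_i p_i x'_i ≥ ∑_i p_i x_i for all x ∈ P_CKP) for which the color constraint of c̃ is tight: ∑_{i : κ_i = c̃} x'_i − ∑_{i : κ_i ≠ c̃} x'_i = 1. -/

import Mathlib

/-!
Take a CKP-LP optimum `y`, which exists by compactness. The gap of the violated color is at most `1`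
at `y` and at least `1` at `x*`, so it equals `1` at some point `z` of the segment from `y` to
`x*`. By convexity `z` lies in the KP-LP region and is at least as profitable as `y`. The other
color constraints come for free at `z`: on nonnegative vectors the gaps of two distinct colors add
up to at most `0`, so once the gap of one color is `1`, every other gap is at most `-1`.
-/

/-- The "color gap" of color `c` at `x`: `∑_{i : κ i = c} x i − ∑_{i : κ i ≠ c} x i`.
The color constraint of `c` is `colorGap n m κ x c ≤ 1`. -/
noncomputable def colorGap (n m : ℕ) (κ : Fin n → Fin m) (x : Fin n → ℝ) (c : Fin m) : ℝ :=
  (∑ i ∈ Finset.univ.filter (fun i => κ i = c), x i)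
    - ∑ i ∈ Finset.univ.filter (fun i => κ i ≠ c), x i

/-- Membership in the KP-LP region `P_KP = {x ∈ [0,1]^n : ∑ i, w i * x i ≤ b}`. -/
def kpFeas (n : ℕ) (w : Fin n → ℝ) (b : ℝ) (x : Fin n → ℝ) : Prop :=
  (∀ i, 0 ≤ x i ∧ x i ≤ 1) ∧ (∑ i, w i * x i) ≤ b

/-- Membership in the CKP-LP region `P_CKP`: `x ∈ P_KP` and every color constraint holds. -/
def ckpFeas (n m : ℕ) (κ : Fin n → Fin m) (w : Fin n → ℝ) (b : ℝ) (x : Fin n → ℝ) : Prop :=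
  kpFeas n w b x ∧ ∀ c : Fin m, colorGap n m κ x c ≤ 1

section LinearFunctional

lemma isLinearMap_sum_mul {ι R : Type*} [Fintype ι] [CommSemiring R] (a : ι → R) :
    IsLinearMap R fun x : ι → R => ∑ i, a i * x i :=
  (dotProductBilin R R a).isLinear

lemma exists_mem_segment_apply_eq {𝕜 E : Type*} [Field 𝕜] [LinearOrder 𝕜] [IsStrictOrderedRing 𝕜]
    [AddCommGroup E] [Module 𝕜 E] (f : E →ᵃ[𝕜] 𝕜) {x y : E} {r : 𝕜}
    (hx : f x ≤ r) (hy : r ≤ f y) : ∃ z ∈ segment 𝕜 x y, f z = r := by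
  have hr : r ∈ f '' segment 𝕜 x y := by
    rw [image_segment, segment_eq_Icc (hx.trans hy)]
    exact ⟨hx, hy⟩
  exact hr

end LinearFunctional

section ColorGap

variable {n m : ℕ} {κ : Fin n → Fin m} {x : Fin n → ℝ} {c d : Fin m}

lemma isLinearMap_colorGap (κ : Fin n → Fin m) (c : Fin m) :
    IsLinearMap ℝ fun x => colorGap n m κ x c where
  map_add x y := by
    simp only [colorGap, Pi.add_apply, Finset.sum_add_distrib]
    ring
  map_smul a x := by
    simp only [colorGap, Pi.smul_apply, smul_eq_mul, ← Finset.mul_sum, mul_sub]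

lemma sum_filter_color_eq_le_sum_filter_color_ne (hx : ∀ i, 0 ≤ x i) (hcd : c ≠ d) :
    ∑ i with κ i = c, x i ≤ ∑ i with κ i ≠ d, x i :=
  Finset.sum_le_sum_of_subset_of_nonneg
    (Finset.monotone_filter_right _ fun _ _ hic => hic.trans_ne hcd) fun i _ _ => hx i

lemma colorGap_add_colorGap_nonpos (hx : ∀ i, 0 ≤ x i) (hcd : c ≠ d) :
    colorGap n m κ x c + colorGap n m κ x d ≤ 0 := by
  have hc : ∑ i with κ i = c, x i ≤ ∑ i with κ i ≠ d, x i :=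
    sum_filter_color_eq_le_sum_filter_color_ne hx hcd
  have hd : ∑ i with κ i = d, x i ≤ ∑ i with κ i ≠ c, x i :=
    sum_filter_color_eq_le_sum_filter_color_ne hx hcd.symm
  unfold colorGap
  linarith

end ColorGap

section FeasibleRegion

variable {n m : ℕ} {κ : Fin n → Fin m} {w x : Fin n → ℝ} {b : ℝ} {c : Fin m}

lemma setOf_kpFeas_eq (w : Fin n → ℝ) (b : ℝ) :
    {x | kpFeas n w b x} = Set.Icc 0 1 ∩ {x | ∑ i, w i * x i ≤ b} := by
  ext x
  simp [kpFeas, Pi.le_def, forall_and]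

lemma convex_setOf_kpFeas (w : Fin n → ℝ) (b : ℝ) : Convex ℝ {x | kpFeas n w b x} := by
  rw [setOf_kpFeas_eq]
  exact (convex_Icc 0 1).inter (convex_halfSpace_le (isLinearMap_sum_mul w) b)

lemma isCompact_setOf_kpFeas (w : Fin n → ℝ) (b : ℝ) : IsCompact {x | kpFeas n w b x} := by
  rw [setOf_kpFeas_eq]
  exact isCompact_Icc.inter_right (isClosed_le (by fun_prop) continuous_const)

lemma isClosed_setOf_colorGap_le (κ : Fin n → Fin m) (c : Fin m) (r : ℝ) :
    IsClosed {x | colorGap n m κ x c ≤ r} :=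
  isClosed_le (isLinearMap_colorGap κ c).mk'.continuous_of_finiteDimensional continuous_const

lemma isCompact_setOf_ckpFeas (κ : Fin n → Fin m) (w : Fin n → ℝ) (b : ℝ) :
    IsCompact {x | ckpFeas n m κ w b x} := by
  have hclosed : IsClosed {x | ∀ c, colorGap n m κ x c ≤ 1} := by
    rw [Set.ofPred_forall]
    exact isClosed_iInter fun c => isClosed_setOf_colorGap_le κ c 1
  exact (isCompact_setOf_kpFeas w b).inter_right hclosed

lemma ckpFeas_zero (κ : Fin n → Fin m) (w : Fin n → ℝ) (hb : 0 ≤ b) : ckpFeas n m κ w b 0 := by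
  simp [ckpFeas, kpFeas, colorGap, hb]

lemma ckpFeas_of_abs_colorGap_le_one (hx : kpFeas n w b x) (hc : |colorGap n m κ x c| ≤ 1) :
    ckpFeas n m κ w b x := by
  obtain ⟨hlower, hupper⟩ := abs_le.mp hc
  refine ⟨hx, fun d => ?_⟩
  obtain rfl | hdc := eq_or_ne d c
  · exact hupper
  · have hsum : colorGap n m κ x d + colorGap n m κ x c ≤ 0 :=
      colorGap_add_colorGap_nonpos (fun i => (hx.1 i).1) hdc
    linarith

end FeasibleRegion

theorem kp_lp_violation_gives_tight_ckp_lp_optimum_general (n m : ℕ) (κ : Fin n → Fin m)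
    (w p : Fin n → ℝ) (b : ℝ) (hne : ∃ x, ckpFeas n m κ w b x) (ctilde : Fin m)
    (xstar : Fin n → ℝ) (hfeas : kpFeas n w b xstar)
    (hopt : ∀ x : Fin n → ℝ, ckpFeas n m κ w b x → (∑ i, p i * x i) ≤ ∑ i, p i * xstar i)
    (hviol : 1 ≤ colorGap n m κ xstar ctilde) :
    ∃ x' : Fin n → ℝ, ckpFeas n m κ w b x' ∧
      (∀ x : Fin n → ℝ, ckpFeas n m κ w b x → (∑ i, p i * x i) ≤ ∑ i, p i * x' i) ∧
      colorGap n m κ x' ctilde = 1 := by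
  obtain ⟨y, hy, hymax⟩ : ∃ y ∈ {x | ckpFeas n m κ w b x},
      IsMaxOn (fun x => ∑ i, p i * x i) {x | ckpFeas n m κ w b x} y :=
    (isCompact_setOf_ckpFeas κ w b).exists_isMaxOn hne (by fun_prop)
  obtain ⟨z, hz, hztight⟩ : ∃ z ∈ segment ℝ y xstar, colorGap n m κ z ctilde = 1 :=
    exists_mem_segment_apply_eq (isLinearMap_colorGap κ ctilde).mk'.toAffineMap
      (hy.2 ctilde) hviol
  have hzfeas : kpFeas n w b z := (convex_setOf_kpFeas w b).segment_subset hy.1 hfeas hz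
  have hzprofit : ∑ i, p i * y i ≤ ∑ i, p i * z i :=
    (convex_halfSpace_ge (isLinearMap_sum_mul p) _).segment_subset
      (le_refl (∑ i, p i * y i)) (hopt y hy) hz
  exact ⟨z, ckpFeas_of_abs_colorGap_le_one hzfeas (by rw [hztight, abs_one]),
    fun x hx => (hymax hx).trans hzprofit, hztight⟩

/-- If `x*` is an optimal solution of the KP-LP whose color constraint is
violated for some color `c̃`, then there exists an optimal solution `x'` of the CKP-LP for
which the color constraint of `c̃` is tight. -/
theorem kp_lp_violation_gives_tight_ckp_lp_optimum (n m : ℕ) (κ : Fin n → Fin m)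
    (w p : Fin n → ℝ) (b : ℝ) (hw : ∀ i, 0 < w i) (hb : 0 < b) (ctilde : Fin m)
    (xstar : Fin n → ℝ) (hfeas : kpFeas n w b xstar)
    (hopt : ∀ x : Fin n → ℝ, kpFeas n w b x → (∑ i, p i * x i) ≤ ∑ i, p i * xstar i)
    (hviol : 1 < colorGap n m κ xstar ctilde) :
    ∃ x' : Fin n → ℝ, ckpFeas n m κ w b x' ∧
      (∀ x : Fin n → ℝ, ckpFeas n m κ w b x → (∑ i, p i * x i) ≤ ∑ i, p i * x' i) ∧
      colorGap n m κ x' ctilde = 1 :=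
  kp_lp_violation_gives_tight_ckp_lp_optimum_general n m κ w p b ⟨0, ckpFeas_zero κ w hb.le⟩ ctilde
    xstar hfeas (fun x hx => hopt x hx.1) hviol.le
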